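/- The following are equivalent for an integral domain D: (1) for every nonzero nonunit x of D, xD is expressible as a *-product of finitely many *-af-homogeneous ideals; (2) D is an AGCD domain and a *-IRKT. -/

import Mathlib

open scoped nonZeroDivisors

/-- A star operation on the nonzero fractional ideals of an integral domain `D`
with quotient field `K`: it fixes nonzero principal fractional ideals, commutes with
multiplication by nonzero principal fractional ideals, is extensive, monotone and
idempotent (on nonzero fractional ideals). -/
structure StarOperation (D K : Type*) [CommRing D] [IsDomain D] [Field K]
    [Algebra D K] [IsFractionRing D K] where
  star : FractionalIdeal D⁰ K → FractionalIdeal D⁰ K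
  star_spanSingleton : ∀ x : K, x ≠ 0 →
    star (FractionalIdeal.spanSingleton D⁰ x) = FractionalIdeal.spanSingleton D⁰ x
  star_smul : ∀ (x : K) (I : FractionalIdeal D⁰ K), x ≠ 0 → I ≠ 0 →
    star (FractionalIdeal.spanSingleton D⁰ x * I) = FractionalIdeal.spanSingleton D⁰ x * star I
  le_star : ∀ I : FractionalIdeal D⁰ K, I ≠ 0 → I ≤ star I
  star_mono : ∀ I J : FractionalIdeal D⁰ K, I ≠ 0 → J ≠ 0 → I ≤ J → star I ≤ star J
  star_idem : ∀ I : FractionalIdeal D⁰ K, I ≠ 0 → star (star I) = star I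

namespace StarOperation

variable {D K : Type*} [CommRing D] [IsDomain D] [Field K] [Algebra D K] [IsFractionRing D K]
variable (s : StarOperation D K)

/-- `*` has finite character: for every nonzero fractional ideal `I`, `I^*` is the union
of `J^*` over the nonzero finitely generated fractional subideals `J` of `I`. -/
def FiniteCharacter : Prop :=
  ∀ I : FractionalIdeal D⁰ K, I ≠ 0 → ∀ x ∈ s.star I,
    ∃ J : FractionalIdeal D⁰ K, J ≠ 0 ∧ (J : Submodule D K).FG ∧ J ≤ I ∧ x ∈ s.star J

/-- A (nonzero) integral ideal `I` of `D` is a `*`-ideal if `I^* = I`. -/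
def IsStarIdeal (I : Ideal D) : Prop :=
  I ≠ ⊥ ∧ s.star (I : FractionalIdeal D⁰ K) = (I : FractionalIdeal D⁰ K)

/-- An integral ideal `I` of `D` is a `*`-ideal of finite type if `I = J^*` for some
nonzero finitely generated ideal `J`. -/
def IsFiniteTypeStarIdeal (I : Ideal D) : Prop :=
  ∃ J : Ideal D, J ≠ ⊥ ∧ J.FG ∧
    s.star (J : FractionalIdeal D⁰ K) = (I : FractionalIdeal D⁰ K)

/-- A maximal `*`-ideal: maximal among proper integral `*`-ideals. -/
def IsMaxStarIdeal (M : Ideal D) : Prop :=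
  M ≠ ⊤ ∧ s.IsStarIdeal M ∧ ∀ J : Ideal D, J ≠ ⊤ → s.IsStarIdeal J → M ≤ J → J = M

/-- `I` is `*`-homogeneous: a proper `*`-ideal of finite type such that `(J + J')^* ≠ D`
for every pair `J`, `J'` of proper `*`-ideals of finite type containing `I`. -/
def IsHomog (I : Ideal D) : Prop :=
  I ≠ ⊤ ∧ s.IsStarIdeal I ∧ s.IsFiniteTypeStarIdeal I ∧
    ∀ J J' : Ideal D, J ≠ ⊤ → J' ≠ ⊤ → s.IsStarIdeal J → s.IsStarIdeal J' →
      s.IsFiniteTypeStarIdeal J → s.IsFiniteTypeStarIdeal J' → I ≤ J → I ≤ J' →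
      s.star ((J + J' : Ideal D) : FractionalIdeal D⁰ K) ≠ 1

/-- The set `M(I) = {x ∈ D : (xD + I)^* ≠ D}` attached to an ideal `I`. -/
def MSet (I : Ideal D) : Set D :=
  {x : D | s.star ((Ideal.span {x} + I : Ideal D) : FractionalIdeal D⁰ K) ≠ 1}

/-- `A` and `B` are `*`-comaximal if `(A + B)^* = D`. -/
def StarComaximal (A B : Ideal D) : Prop :=
  s.star ((A + B : Ideal D) : FractionalIdeal D⁰ K) = 1

/-- An integral ideal `I` is `*`-invertible if `(I · I⁻¹)^* = D`. -/
def StarInvertible (I : Ideal D) : Prop :=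
  s.star ((I : FractionalIdeal D⁰ K) * (I : FractionalIdeal D⁰ K)⁻¹) = 1

/-- `D` is a `*`-SH domain: every principal ideal generated by a nonzero nonunit is a
`*`-product of finitely many `*`-homogeneous ideals. -/
def IsSHDomain : Prop :=
  ∀ x : D, x ≠ 0 → ¬IsUnit x →
    ∃ T : Multiset (Ideal D), (∀ J ∈ T, s.IsHomog J) ∧
      s.star ((T.prod : Ideal D) : FractionalIdeal D⁰ K) =
        ((Ideal.span {x} : Ideal D) : FractionalIdeal D⁰ K)

/-- `D` has finite `*`-character: every nonzero nonunit lies in only finitely many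
maximal `*`-ideals. -/
def FiniteStarCharacter : Prop :=
  ∀ x : D, x ≠ 0 → ¬IsUnit x → {P : Ideal D | s.IsMaxStarIdeal P ∧ x ∈ P}.Finite

end StarOperation

namespace StarOperation

variable {D K : Type*} [CommRing D] [IsDomain D] [Field K] [Algebra D K] [IsFractionRing D K]

/-- A `*`-homogeneous ideal `I` is `*`-super homogeneous if every `*`-ideal of finite
type containing `I` is `*`-invertible. -/
def IsSuperHomog (s : StarOperation D K) (I : Ideal D) : Prop :=
  s.IsHomog I ∧ ∀ J : Ideal D, s.IsStarIdeal J → s.IsFiniteTypeStarIdeal J → I ≤ J →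
    s.StarInvertible J

/-- `D` is a `*`-independent ring of Krull type: localizations at maximal `*`-ideals are
valuation domains, `D` is the locally finite intersection of these localizations (inside
`K`), and no two distinct maximal `*`-ideals contain a common nonzero prime ideal. -/
def IsIRKT (s : StarOperation D K) : Prop :=
  (∀ (P : Ideal D) [P.IsPrime], s.IsMaxStarIdeal P →
    ValuationRing (Localization.AtPrime P)) ∧
  (∀ x : K, (∀ P : Ideal D, s.IsMaxStarIdeal P →
      ∃ a t : D, t ∉ P ∧ x * algebraMap D K t = algebraMap D K a) →
    ∃ d : D, algebraMap D K d = x) ∧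
  s.FiniteStarCharacter ∧
  (∀ P Q : Ideal D, s.IsMaxStarIdeal P → s.IsMaxStarIdeal Q → P ≠ Q →
    ∀ L : Ideal D, L.IsPrime → L ≠ ⊥ → ¬(L ≤ P ⊓ Q))

end StarOperation

namespace StarOperation

variable {D K : Type*} [CommRing D] [IsDomain D] [Field K] [Algebra D K] [IsFractionRing D K]

/-- A `*`-homogeneous ideal `I` is `*`-af-homogeneous if for every `*`-ideal `J` of
finite type containing `I` there is a positive integer `n` with `(Jⁿ)^*` principal. -/
def IsAfHomog (s : StarOperation D K) (I : Ideal D) : Prop :=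
  s.IsHomog I ∧ ∀ J : Ideal D, s.IsStarIdeal J → s.IsFiniteTypeStarIdeal J → I ≤ J →
    ∃ n : ℕ, 0 < n ∧ ∃ d : D,
      s.star ((J ^ n : Ideal D) : FractionalIdeal D⁰ K) =
        ((Ideal.span {d} : Ideal D) : FractionalIdeal D⁰ K)

end StarOperation

/-
Closures of ideals of finite type can be divided: if `A` is `*`-invertible and contains the
`*`-ideal `J`, then `J = (A (J : A))*`. Given (1), dividing `J` successively by `(J + I)*` for the
`*`-af-homogeneous factors `I` of an element of `J` shows that some power of `J` has a principal
closure. So all ideals of finite type are `*`-invertible, which makes the localizations at maximal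
`*`-ideals valuation rings. There `(a, b)^n = (a^n, b^n)` and `(a, b) ((a) ∩ (b)) = (ab)`, so
`((a, b)^n)*` is principal exactly when `(a^n) ∩ (b^n)` is; this is the AGCD property. A finite type
ideal is `*`-homogeneous exactly when it lies in a unique maximal `*`-ideal, whence finiteness and
independence. Conversely, under (2) all ideals of finite type are `*`-invertible, and an ideal of
finite type lying in two maximal `*`-ideals `P ≠ Q` is a `*`-product of two larger ones, one not in
`P` and one not in `Q`; induction on the number of maximal `*`-ideals above it gives (1).
-/

section Ideals

variable {D : Type*} [CommRing D]

lemma le_colon_iff_mul_le {I J N : Ideal D} : N ≤ J.colon (I : Set D) ↔ N * I ≤ J := by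
  rw [Ideal.mul_le]
  exact forall₂_congr fun _ _ => Submodule.mem_colon

lemma isPrincipal_mul {I J : Ideal D} (hI : I.IsPrincipal) (hJ : J.IsPrincipal) :
    (I * J).IsPrincipal := by
  obtain ⟨a, rfl⟩ := hI
  obtain ⟨b, rfl⟩ := hJ
  exact ⟨a * b, Ideal.span_singleton_mul_span_singleton a b⟩

lemma isPrincipal_of_span_singleton_mul_eq [IsDomain D] {m x : D} {I : Ideal D} (hm : m ≠ 0)
    (h : Ideal.span {m} * I = Ideal.span {x}) : I.IsPrincipal := by
  have hx : x ∈ Ideal.span {m} * I := h ▸ Ideal.mem_span_singleton_self x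
  obtain ⟨y, -, rfl⟩ := Ideal.mem_span_singleton_mul.1 hx
  rw [← Ideal.span_singleton_mul_span_singleton] at h
  exact ⟨y, Ideal.span_singleton_mul_right_injective hm h⟩

lemma fg_of_fg_span_singleton_mul [IsDomain D] {d : D} (hd : d ≠ 0) {I : Ideal D}
    (h : (Ideal.span {d} * I).FG) : I.FG := by
  refine Submodule.fg_of_fg_map_injective (LinearMap.mul D D d) (mul_right_injective₀ hd) ?_
  have hmap : Submodule.map (LinearMap.mul D D d) I = Ideal.span {d} * I := by
    ext z
    exact Ideal.mem_span_singleton_mul.symm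
  rwa [hmap]

lemma exists_span_singleton_mul_eq {d : D} {I : Ideal D} (h : I ≤ Ideal.span {d}) :
    ∃ J : Ideal D, Ideal.span {d} * J = I := by
  refine ⟨Submodule.comap (LinearMap.mul D D d) I, le_antisymm ?_ fun z hz => ?_⟩
  · exact Ideal.span_singleton_mul_le_iff.2 fun _ hz => hz
  · obtain ⟨y, rfl⟩ := Ideal.mem_span_singleton.1 (h hz)
    exact Ideal.mem_span_singleton_mul.2 ⟨y, hz, rfl⟩

lemma exists_fg_le_sup {F I J : Ideal D} (hF : F.FG) (h : F ≤ I ⊔ J) :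
    ∃ F₁ F₂ : Ideal D, F₁.FG ∧ F₂.FG ∧ F₁ ≤ I ∧ F₂ ≤ J ∧ F ≤ F₁ ⊔ F₂ := by
  induction F, hF using Submodule.fg_induction with
  | singleton x =>
    obtain ⟨p, hp, q, hq, rfl⟩ := Submodule.mem_sup.1 (h (Submodule.mem_span_singleton_self x))
    refine ⟨Ideal.span {p}, Ideal.span {q}, Submodule.fg_span_singleton p,
      Submodule.fg_span_singleton q, (Ideal.span_singleton_le_iff_mem I).2 hp,
      (Ideal.span_singleton_le_iff_mem J).2 hq, (Ideal.span_singleton_le_iff_mem _).2 ?_⟩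
    exact Submodule.add_mem_sup (Ideal.mem_span_singleton_self p) (Ideal.mem_span_singleton_self q)
  | sup F G _ _ ihF ihG =>
    obtain ⟨F₁, F₂, hF₁, hF₂, hF₁I, hF₂J, hF⟩ := ihF (le_sup_left.trans h)
    obtain ⟨G₁, G₂, hG₁, hG₂, hG₁I, hG₂J, hG⟩ := ihG (le_sup_right.trans h)
    refine ⟨F₁ ⊔ G₁, F₂ ⊔ G₂, Submodule.FG.sup hF₁ hG₁, Submodule.FG.sup hF₂ hG₂, sup_le hF₁I hG₁I,
      sup_le hF₂J hG₂J, ?_⟩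
    exact (sup_le_sup hF hG).trans (sup_sup_sup_comm F₁ F₂ G₁ G₂).le

-- The prime `L` avoids the multiplicative set of all products `u * v`.
lemma exists_dvd_mul_of_forall_prime {P Q : Ideal D} [P.IsPrime] [Q.IsPrime] {x : D}
    (h : ∀ L : Ideal D, L.IsPrime → x ∈ L → ¬ L ≤ P ⊓ Q) :
    ∃ u ∉ P, ∃ v ∉ Q, x ∣ u * v := by
  by_contra! hdvd
  have hdisj : Disjoint (Ideal.span {x} : Set D) (P.primeCompl ⊔ Q.primeCompl : Submonoid D) := by
    rw [Set.disjoint_left]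
    rintro z hz hz'
    obtain ⟨u, hu, v, hv, rfl⟩ := Submonoid.mem_sup.1 hz'
    exact hdvd u hu v hv (Ideal.mem_span_singleton.1 hz)
  obtain ⟨L, hL, hxL, hLdisj⟩ := Ideal.exists_le_prime_disjoint _ _ hdisj
  refine h L hL ((Ideal.span_singleton_le_iff_mem L).1 hxL) (le_inf (fun z hz => ?_) fun z hz => ?_)
  all_goals by_contra hz'
  · exact Set.disjoint_left.1 hLdisj hz (Submonoid.mem_sup_left hz')
  · exact Set.disjoint_left.1 hLdisj hz (Submonoid.mem_sup_right hz')

lemma valuationRing_localization_atPrime [IsDomain D] {P : Ideal D} [P.IsPrime]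
    (h : ∀ a b : D, (∃ t ∉ P, a ∣ t * b) ∨ ∃ t ∉ P, b ∣ t * a) :
    ValuationRing (Localization.AtPrime P) := by
  have dvd_of_dvd_mul (a b : D) (u v : P.primeCompl) (hab : ∃ t ∉ P, a ∣ t * b) :
      IsLocalization.mk' (Localization.AtPrime P) a u ∣
        IsLocalization.mk' (Localization.AtPrime P) b v := by
    obtain ⟨t, ht, r, hr⟩ := hab
    refine ⟨IsLocalization.mk' _ (u * r) (⟨t, ht⟩ * v), ?_⟩
    rw [← IsLocalization.mk'_mul, IsLocalization.mk'_eq_iff_eq, Submonoid.coe_mul,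
      Submonoid.coe_mul]
    exact congrArg _ (by linear_combination (u * v : D) * hr)
  refine ValuationRing.iff_dvd_total.2 ⟨fun x y => ?_⟩
  obtain ⟨a, u, rfl⟩ := IsLocalization.exists_mk'_eq P.primeCompl x
  obtain ⟨b, v, rfl⟩ := IsLocalization.exists_mk'_eq P.primeCompl y
  exact (h a b).imp (dvd_of_dvd_mul a b u v) (dvd_of_dvd_mul b a v u)

lemma sup_pow_of_preValuationRing [PreValuationRing D] (I J : Ideal D) (n : ℕ) :
    (I ⊔ J) ^ n = I ^ n ⊔ J ^ n := by
  rcases (PreValuationRing.iff_ideal_total.1 ‹_›).total I J with h | h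
  · rw [sup_eq_right.2 h, sup_eq_right.2 (Ideal.pow_right_mono h n)]
  · rw [sup_eq_left.2 h, sup_eq_left.2 (Ideal.pow_right_mono h n)]

lemma sup_mul_inf_of_preValuationRing [PreValuationRing D] (I J : Ideal D) :
    (I ⊔ J) * (I ⊓ J) = I * J := by
  rcases (PreValuationRing.iff_ideal_total.1 ‹_›).total I J with h | h
  · rw [sup_eq_right.2 h, inf_eq_left.2 h, mul_comm]
  · rw [sup_eq_left.2 h, inf_eq_right.2 h]

end Ideals

/-- The almost GCD (AGCD) domains. -/
def IsAlmostGCD (D : Type*) [CommRing D] : Prop :=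
  ∀ a b : D, a ≠ 0 → b ≠ 0 →
    ∃ n : ℕ, 0 < n ∧ (Ideal.span {a ^ n} ⊓ Ideal.span {b ^ n} : Ideal D).IsPrincipal

/-- The restriction of a star operation to the integral ideals, extended by `0* = 0`. The extension
makes it a closure operator on all of `Ideal D`, with laws free of nonvanishing conditions. -/
structure StarClosure (D : Type*) [CommRing D] extends ClosureOperator (Ideal D) where
  map_span_singleton_mul' (a : D) (I : Ideal D) :
    toFun (Ideal.span {a} * I) = Ideal.span {a} * toFun I

namespace StarClosure

section Closure

variable {D : Type*} [CommRing D] (c : StarClosure D)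

instance : CoeFun (StarClosure D) fun _ => Ideal D → Ideal D := ⟨fun c => c.toClosureOperator⟩

/-- The closure has finite character: it is determined by its values on finitely generated
ideals. -/
def IsFinitary : Prop :=
  ∀ (I : Ideal D) (x : D), x ∈ c I → ∃ J : Ideal D, J.FG ∧ J ≤ I ∧ x ∈ c J

/-- The `*`-ideals of finite type: the closures of the finitely generated ideals. The zero ideal
is allowed. -/
def IsFiniteType (I : Ideal D) : Prop :=
  ∃ J : Ideal D, J.FG ∧ c J = I

/-- The maximal `*`-ideals: maximal among the proper closed ideals. If `D` is a field then `⊥` is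
one, unlike in the setting of nonzero ideals. -/
def IsMaxClosed (P : Ideal D) : Prop :=
  Maximal (fun J => J ≠ ⊤ ∧ c.IsClosed J) P

/-- The set of maximal `*`-ideals that contain `I`. -/
def maxClosedAbove (I : Ideal D) : Set (Ideal D) :=
  {P | c.IsMaxClosed P ∧ I ≤ P}

/-- The `*`-homogeneous ideals: any two proper ideals of finite type above `I` have a sum with
proper closure. The zero ideal is allowed. -/
def IsHomogeneous (I : Ideal D) : Prop :=
  I ≠ ⊤ ∧ c.IsFiniteType I ∧
    ∀ J J' : Ideal D, J ≠ ⊤ → J' ≠ ⊤ → c.IsFiniteType J → c.IsFiniteType J' → I ≤ J → I ≤ J' →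
      c (J ⊔ J') ≠ ⊤

/-- Some positive power of `I` has a principal closure. -/
def HasPrincipalPower (I : Ideal D) : Prop :=
  ∃ n : ℕ, 0 < n ∧ (c (I ^ n)).IsPrincipal

/-- The `*`-af-homogeneous ideals: every ideal of finite type above `I` has a power with principal
closure. -/
def IsAfHomogeneous (I : Ideal D) : Prop :=
  c.IsHomogeneous I ∧ ∀ J : Ideal D, c.IsFiniteType J → I ≤ J → c.HasPrincipalPower J

/-- `A` is `*`-invertible with an inverse of finite type. The inverse is scaled by a nonzero `d`
to be an integral ideal. -/
def IsInvertible (A : Ideal D) : Prop :=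
  ∃ B : Ideal D, c.IsFiniteType B ∧ ∃ d : D, d ≠ 0 ∧ c (A * B) = Ideal.span {d}

/-- Localizations at maximal `*`-ideals are valuation rings. -/
def IsLocallyValuation [IsDomain D] : Prop :=
  ∀ (P : Ideal D) [P.IsPrime], c.IsMaxClosed P → ValuationRing (Localization.AtPrime P)

/-- No two distinct maximal `*`-ideals contain a common nonzero prime ideal. -/
def IsIndependent : Prop :=
  ∀ P Q : Ideal D, c.IsMaxClosed P → c.IsMaxClosed Q → P ≠ Q →
    ∀ L : Ideal D, L.IsPrime → L ≠ ⊥ → ¬L ≤ P ⊓ Q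

/-- The `*`-independent rings of Krull type. That `D` is the intersection of its localizations at
the maximal `*`-ideals is automatic, see `StarClosure.IsFinitary.dvd_of_forall`. -/
structure IsIRKT [IsDomain D] : Prop where
  isLocallyValuation : c.IsLocallyValuation
  finite_maxClosedAbove : ∀ x : D, x ≠ 0 → ¬IsUnit x → (c.maxClosedAbove (Ideal.span {x})).Finite
  isIndependent : c.IsIndependent

/-- The domains in which every principal ideal generated by a nonzero nonunit is a `*`-product of
finitely many `*`-af-homogeneous ideals. -/
def IsAfSH : Prop :=
  ∀ x : D, x ≠ 0 → ¬IsUnit x →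
    ∃ T : Multiset (Ideal D), (∀ J ∈ T, c.IsAfHomogeneous J) ∧ c T.prod = Ideal.span {x}

lemma map_span_singleton_mul (a : D) (I : Ideal D) :
    c (Ideal.span {a} * I) = Ideal.span {a} * c I :=
  c.map_span_singleton_mul' a I

lemma closure_span_singleton (a : D) : c (Ideal.span {a}) = Ideal.span {a} := by
  rw [← Ideal.mul_top (Ideal.span {a}), map_span_singleton_mul, c.closure_top]

lemma closure_bot : c ⊥ = ⊥ := by
  simpa only [Ideal.span_singleton_zero] using c.closure_span_singleton 0

lemma mul_closure_le (I J : Ideal D) : I * c J ≤ c (I * J) := by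
  refine Ideal.mul_le.2 fun a ha b hb => ?_
  have hab : a * b ∈ Ideal.span {a} * c J :=
    Ideal.mul_mem_mul (Ideal.mem_span_singleton_self a) hb
  rw [← c.map_span_singleton_mul] at hab
  exact c.monotone (Ideal.mul_mono_left ((Ideal.span_singleton_le_iff_mem I).2 ha)) hab

lemma closure_mul_closure_right (I J : Ideal D) : c (I * c J) = c (I * J) := by
  refine (c.closure_min (c.mul_closure_le I J) (c.isClosed_closure _)).antisymm ?_
  exact c.monotone (Ideal.mul_mono_right (c.le_closure J))

lemma closure_mul_closure_left (I J : Ideal D) : c (c I * J) = c (I * J) := by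
  rw [mul_comm, closure_mul_closure_right, mul_comm]

lemma closure_closure_pow (I : Ideal D) (n : ℕ) : c (c I ^ n) = c (I ^ n) := by
  induction n with
  | zero => rw [pow_zero, pow_zero]
  | succ n ih =>
    rw [pow_succ, pow_succ, closure_mul_closure_right, ← closure_mul_closure_left, ih,
      closure_mul_closure_left]

variable {c} {I J : Ideal D}

lemma isPrincipal_closure_mul (hI : (c I).IsPrincipal) (hJ : (c J).IsPrincipal) :
    (c (I * J)).IsPrincipal := by
  obtain ⟨a, ha⟩ := hI
  rw [Ideal.submodule_span_eq] at ha
  rw [← closure_mul_closure_left, ha, map_span_singleton_mul]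
  exact isPrincipal_mul ⟨a, rfl⟩ hJ

lemma isPrincipal_closure_pow (hI : (c I).IsPrincipal) (n : ℕ) : (c (I ^ n)).IsPrincipal := by
  induction n with
  | zero => rw [pow_zero, Ideal.one_eq_top, c.closure_top]; exact top_isPrincipal
  | succ n ih => rw [pow_succ]; exact isPrincipal_closure_mul ih hI

lemma IsFiniteType.isClosed (hI : c.IsFiniteType I) : c.IsClosed I := by
  obtain ⟨F, -, rfl⟩ := hI
  exact c.isClosed_closure F

lemma isFiniteType_closure (hI : I.FG) : c.IsFiniteType (c I) := ⟨I, hI, rfl⟩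

lemma isFiniteType_span_singleton (a : D) : c.IsFiniteType (Ideal.span {a}) :=
  ⟨Ideal.span {a}, Submodule.fg_span_singleton a, c.closure_span_singleton a⟩

lemma IsFiniteType.sup (hI : c.IsFiniteType I) (hJ : c.IsFiniteType J) :
    c.IsFiniteType (c (I ⊔ J)) := by
  obtain ⟨F, hF, rfl⟩ := hI
  obtain ⟨G, hG, rfl⟩ := hJ
  exact ⟨F ⊔ G, Submodule.FG.sup hF hG, (c.closure_sup_closure F G).symm⟩

lemma IsFiniteType.mul (hI : c.IsFiniteType I) (hJ : c.IsFiniteType J) :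
    c.IsFiniteType (c (I * J)) := by
  obtain ⟨F, hF, rfl⟩ := hI
  obtain ⟨G, hG, rfl⟩ := hJ
  exact ⟨F * G, hF.mul hG, by rw [closure_mul_closure_right, closure_mul_closure_left]⟩

lemma IsFiniteType.pow (hI : c.IsFiniteType I) (n : ℕ) : c.IsFiniteType (c (I ^ n)) := by
  obtain ⟨F, hF, rfl⟩ := hI
  exact ⟨F ^ n, hF.pow, (c.closure_closure_pow F n).symm⟩

lemma hasPrincipalPower_closure_iff : c.HasPrincipalPower (c I) ↔ c.HasPrincipalPower I := by
  simp only [HasPrincipalPower, closure_closure_pow]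

lemma HasPrincipalPower.mul (hI : c.HasPrincipalPower I) (hJ : c.HasPrincipalPower J) :
    c.HasPrincipalPower (I * J) := by
  obtain ⟨m, hm, hIm⟩ := hI
  obtain ⟨n, hn, hJn⟩ := hJ
  refine ⟨m * n, Nat.mul_pos hm hn, ?_⟩
  rw [mul_pow, pow_mul I, mul_comm m, pow_mul J]
  exact isPrincipal_closure_mul (isPrincipal_closure_pow hIm n) (isPrincipal_closure_pow hJn m)

lemma HasPrincipalPower.of_pow {n : ℕ} (hn : 0 < n) (h : c.HasPrincipalPower (I ^ n)) :
    c.HasPrincipalPower I := by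
  obtain ⟨m, hm, hI⟩ := h
  exact ⟨n * m, Nat.mul_pos hn hm, pow_mul I n m ▸ hI⟩

lemma hasPrincipalPower_of_isPrincipal (hI : (c I).IsPrincipal) : c.HasPrincipalPower I :=
  ⟨1, one_pos, by rwa [pow_one]⟩

lemma isInvertible_closure_iff : c.IsInvertible (c I) ↔ c.IsInvertible I := by
  simp only [IsInvertible, closure_mul_closure_left]

lemma HasPrincipalPower.isInvertible [IsDomain D] (h : c.HasPrincipalPower I)
    (hI : c.IsFiniteType I) (hI₀ : I ≠ ⊥) : c.IsInvertible I := by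
  obtain ⟨n, hn, d, hd⟩ := h
  rw [Ideal.submodule_span_eq] at hd
  refine ⟨c (I ^ (n - 1)), hI.pow (n - 1), d, ?_, ?_⟩
  · rintro rfl
    rw [Ideal.span_singleton_zero] at hd
    exact pow_ne_zero n hI₀ (eq_bot_mono (c.le_closure _) hd)
  · rw [closure_mul_closure_right, mul_pow_sub_one hn.ne', hd]

end Closure

section Division

variable {D : Type*} [CommRing D] [IsDomain D] {c : StarClosure D} {A B I J : Ideal D} {d : D}

lemma isPrincipal_of_closure_mul_eq (hd : d ≠ 0) (hJ : c.IsClosed J)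
    (h : c (I * J) = Ideal.span {d}) (hI : I.IsPrincipal) : J.IsPrincipal := by
  obtain ⟨a, rfl⟩ := hI
  rw [Ideal.submodule_span_eq, map_span_singleton_mul, hJ.closure_eq] at h
  refine isPrincipal_of_span_singleton_mul_eq ?_ h
  rintro rfl
  rw [Ideal.span_singleton_zero, Ideal.bot_mul] at h
  exact hd (Ideal.span_singleton_eq_bot.1 h.symm)

lemma IsFiniteType.of_span_singleton_mul (hd : d ≠ 0) (h : c.IsFiniteType (Ideal.span {d} * I)) :
    c.IsFiniteType I := by
  obtain ⟨F, hF, hFI⟩ := h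
  obtain ⟨G, rfl⟩ := exists_span_singleton_mul_eq
    ((c.le_closure F).trans (hFI.trans_le Ideal.mul_le_left))
  rw [map_span_singleton_mul] at hFI
  exact ⟨G, fg_of_fg_span_singleton_mul hd hF, Ideal.span_singleton_mul_right_injective hd hFI⟩

lemma span_singleton_mul_colon (hd : d ≠ 0) (hAB : c (A * B) = Ideal.span {d})
    (hJ : c.IsClosed J) (hJA : J ≤ A) :
    Ideal.span {d} * J.colon (A : Set D) = c (J * B) := by
  have hle : c (J * B) ≤ Ideal.span {d} := hAB ▸ c.monotone (Ideal.mul_mono_left hJA)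
  obtain ⟨N, hN⟩ := exists_span_singleton_mul_eq hle
  have hNA : N * A ≤ J := by
    rw [← Ideal.span_singleton_mul_right_mono hd, ← mul_assoc, hN]
    calc c (J * B) * A ≤ c (A * (J * B)) := mul_comm (c (J * B)) A ▸ c.mul_closure_le A (J * B)
      _ = c (Ideal.span {d} * J) := by
        rw [mul_left_comm, mul_comm, ← closure_mul_closure_left, hAB]
      _ = Ideal.span {d} * J := by rw [map_span_singleton_mul, hJ.closure_eq]
  refine le_antisymm ?_ (hN ▸ Ideal.mul_mono_right (le_colon_iff_mul_le.2 hNA))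
  calc Ideal.span {d} * J.colon (A : Set D) = J.colon (A : Set D) * c (A * B) := by
        rw [hAB, mul_comm]
    _ ≤ c (J.colon (A : Set D) * (A * B)) := c.mul_closure_le _ _
    _ ≤ c (J * B) := by
      rw [← mul_assoc]
      exact c.monotone (Ideal.mul_mono_left (le_colon_iff_mul_le.1 le_rfl))

lemma IsInvertible.closure_mul_colon (hA : c.IsInvertible A) (hJ : c.IsClosed J) (hJA : J ≤ A) :
    c (A * J.colon (A : Set D)) = J := by
  obtain ⟨B, -, d, hd, hAB⟩ := hA
  refine Ideal.span_singleton_mul_right_injective hd ?_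
  calc Ideal.span {d} * c (A * J.colon (A : Set D))
      = c (A * c (J * B)) := by
        rw [← map_span_singleton_mul, mul_left_comm, span_singleton_mul_colon hd hAB hJ hJA]
    _ = c (J * c (A * B)) := by
        rw [closure_mul_closure_right, closure_mul_closure_right, mul_left_comm]
    _ = Ideal.span {d} * J := by
        rw [hAB, mul_comm, map_span_singleton_mul, hJ.closure_eq]

lemma IsInvertible.isFiniteType_colon (hA : c.IsInvertible A) (hJ : c.IsFiniteType J)
    (hJA : J ≤ A) : c.IsFiniteType (J.colon (A : Set D)) := by
  obtain ⟨B, hB, d, hd, hAB⟩ := hA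
  refine IsFiniteType.of_span_singleton_mul hd ?_
  rw [span_singleton_mul_colon hd hAB hJ.isClosed hJA]
  exact hJ.mul hB

end Division

section MaxClosed

variable {D : Type*} [CommRing D] {c : StarClosure D} {I P Q : Ideal D}

lemma IsFinitary.isClosed_sSup (hc : c.IsFinitary) {S : Set (Ideal D)} (hS : S.Nonempty)
    (hdir : DirectedOn (· ≤ ·) S) (hclosed : ∀ J ∈ S, c.IsClosed J) : c.IsClosed (sSup S) := by
  refine c.isClosed_iff_closure_le.2 fun x hx => ?_
  obtain ⟨F, hF, hFS, hxF⟩ := hc _ x hx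
  obtain ⟨J, hJ, hFJ⟩ := (CompleteLattice.isCompactElement_iff_le_of_directed_sSup_le _ F).1
    ((Submodule.fg_iff_compact F).1 hF) S hS hdir hFS
  exact le_sSup hJ ((hclosed J hJ).closure_le_iff.2 hFJ hxF)

lemma IsFinitary.exists_isMaxClosed_ge (hc : c.IsFinitary) (hI : c I ≠ ⊤) :
    ∃ P, c.IsMaxClosed P ∧ I ≤ P := by
  have hbound : ∀ S ⊆ {J : Ideal D | J ≠ ⊤ ∧ c.IsClosed J}, IsChain (· ≤ ·) S → ∀ J ∈ S,
      ∃ ub ∈ {J : Ideal D | J ≠ ⊤ ∧ c.IsClosed J}, ∀ K ∈ S, K ≤ ub := by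
    intro S hS hchain J hJ
    refine ⟨sSup S, ⟨fun htop => ?_, ?_⟩, fun _ => le_sSup⟩
    · obtain ⟨K, hK, h1K⟩ := (Submodule.mem_sSup_of_directed ⟨J, hJ⟩ hchain.directedOn).1
        ((Ideal.eq_top_iff_one _).1 htop)
      exact (hS hK).1 ((Ideal.eq_top_iff_one K).2 h1K)
    · exact hc.isClosed_sSup ⟨J, hJ⟩ hchain.directedOn fun K hK => (hS hK).2
  obtain ⟨P, hIP, hP⟩ := zorn_le_nonempty₀ _ hbound (c I) ⟨hI, c.isClosed_closure I⟩
  exact ⟨P, hP, (c.le_closure I).trans hIP⟩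

lemma IsMaxClosed.closure_sup_eq_top (hP : c.IsMaxClosed P) (hI : ¬I ≤ P) : c (P ⊔ I) = ⊤ := by
  by_contra htop
  exact hI ((le_sup_right.trans (c.le_closure _)).trans
    (hP.le_of_ge ⟨htop, c.isClosed_closure _⟩ (le_sup_left.trans (c.le_closure _))))

lemma IsMaxClosed.closure_ne_top (hP : c.IsMaxClosed P) (hI : I ≤ P) : c I ≠ ⊤ :=
  ne_top_of_le_ne_top hP.prop.1 (hP.prop.2.closure_le_iff.2 hI)

lemma IsMaxClosed.eq_of_le (hP : c.IsMaxClosed P) (hQ : c.IsMaxClosed Q) (h : P ≤ Q) : P = Q :=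
  h.antisymm (hP.le_of_ge hQ.prop h)

variable (c) in
lemma maxClosedAbove_antitone : Antitone c.maxClosedAbove :=
  fun _ _ hIJ _ hP => ⟨hP.1, hIJ.trans hP.2⟩

lemma IsMaxClosed.isPrime (hP : c.IsMaxClosed P) : P.IsPrime := by
  refine ⟨hP.prop.1, fun {x y} hxy => or_iff_not_imp_left.2 fun hx => ?_⟩
  have htop : c (P ⊔ Ideal.span {x}) = ⊤ :=
    hP.closure_sup_eq_top fun h => hx ((Ideal.span_singleton_le_iff_mem P).1 h)
  have hyP : Ideal.span {y} * (P ⊔ Ideal.span {x}) ≤ P := by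
    rw [Ideal.mul_sup, Ideal.span_singleton_mul_span_singleton, mul_comm y]
    exact sup_le Ideal.mul_le_right ((Ideal.span_singleton_le_iff_mem P).2 hxy)
  have hy := hP.prop.2.closure_le_iff.2 hyP
  rwa [map_span_singleton_mul, htop, Ideal.mul_top, Ideal.span_singleton_le_iff_mem] at hy

end MaxClosed

section Local

variable {D : Type*} [CommRing D] {c : StarClosure D} {I J : Ideal D}

-- The denominators of `z` modulo `I` form an ideal that lies in no maximal `*`-ideal.
lemma IsFinitary.mem_closure_of_forall (hc : c.IsFinitary) {z : D}
    (h : ∀ P, c.IsMaxClosed P → ∃ t ∉ P, t * z ∈ I) : z ∈ c I := by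
  have hle : I.colon ({z} : Set D) * Ideal.span {z} ≤ I := by
    refine Ideal.mul_le.2 fun t ht w hw => ?_
    obtain ⟨r, rfl⟩ := Ideal.mem_span_singleton'.1 hw
    rw [mul_left_comm]
    exact I.mul_mem_left r (Submodule.mem_colon_singleton.1 ht)
  have htop : c (I.colon ({z} : Set D)) = ⊤ := by
    by_contra hne
    obtain ⟨P, hP, hleP⟩ := hc.exists_isMaxClosed_ge hne
    obtain ⟨t, htP, ht⟩ := h P hP
    exact htP (hleP (Submodule.mem_colon_singleton.2 ht))
  have hz := c.monotone hle
  rwa [mul_comm, map_span_singleton_mul, htop, Ideal.mul_top, Ideal.span_singleton_le_iff_mem]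
    at hz

lemma IsFinitary.dvd_of_forall (hc : c.IsFinitary) {a b : D}
    (h : ∀ P, c.IsMaxClosed P → ∃ t ∉ P, b ∣ t * a) : b ∣ a := by
  rw [← Ideal.mem_span_singleton, ← c.closure_span_singleton b]
  refine hc.mem_closure_of_forall fun P hP => ?_
  obtain ⟨t, htP, ht⟩ := h P hP
  exact ⟨t, htP, Ideal.mem_span_singleton.2 ht⟩

lemma IsFinitary.le_closure_of_forall_map_le (hc : c.IsFinitary)
    (h : ∀ (P : Ideal D) [P.IsPrime], c.IsMaxClosed P →
      I.map (algebraMap D (Localization.AtPrime P)) ≤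
        J.map (algebraMap D (Localization.AtPrime P))) : I ≤ c J := by
  refine fun z hz => hc.mem_closure_of_forall fun P hP => ?_
  have := hP.isPrime
  obtain ⟨t, htP, ht⟩ := (IsLocalization.algebraMap_mem_map_algebraMap_iff P.primeCompl
    (Localization.AtPrime P) J z).1 (h P hP (Ideal.mem_map_of_mem _ hz))
  exact ⟨t, htP, ht⟩

variable [IsDomain D]

lemma IsLocallyValuation.closure_sup_pow (hv : c.IsLocallyValuation) (hc : c.IsFinitary)
    (I J : Ideal D) (n : ℕ) : c ((I ⊔ J) ^ n) = c (I ^ n ⊔ J ^ n) := by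
  refine le_antisymm (c.closure_min ?_ (c.isClosed_closure _)) (c.monotone (sup_le ?_ ?_))
  · refine hc.le_closure_of_forall_map_le fun P _ hP => ?_
    have := hv P hP
    simp only [Ideal.map_pow, Ideal.map_sup, sup_pow_of_preValuationRing, le_refl]
  · exact Ideal.pow_right_mono le_sup_left n
  · exact Ideal.pow_right_mono le_sup_right n

lemma IsLocallyValuation.closure_sup_mul_inf (hv : c.IsLocallyValuation) (hc : c.IsFinitary)
    (I J : Ideal D) : c ((I ⊔ J) * (I ⊓ J)) = c (I * J) := by
  refine le_antisymm (c.closure_min ?_ (c.isClosed_closure _))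
    (c.closure_min ?_ (c.isClosed_closure _))
  all_goals
    refine hc.le_closure_of_forall_map_le fun P _ hP => ?_
    have := hv P hP
    simp only [Ideal.map_mul, Ideal.map_sup, IsLocalization.map_inf P.primeCompl,
      sup_mul_inf_of_preValuationRing, le_refl]

lemma IsLocallyValuation.isPrincipal_closure_sup_iff (hv : c.IsLocallyValuation)
    (hc : c.IsFinitary) (a b : D) :
    (c (Ideal.span {a} ⊔ Ideal.span {b})).IsPrincipal ↔
      (Ideal.span {a} ⊓ Ideal.span {b} : Ideal D).IsPrincipal := by
  rcases eq_or_ne a 0 with rfl | ha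
  · rw [Ideal.span_singleton_zero, bot_sup_eq, bot_inf_eq, closure_span_singleton]
    exact iff_of_true ⟨b, rfl⟩ bot_isPrincipal
  rcases eq_or_ne b 0 with rfl | hb
  · rw [Ideal.span_singleton_zero, sup_bot_eq, inf_bot_eq, closure_span_singleton]
    exact iff_of_true ⟨a, rfl⟩ bot_isPrincipal
  have hinf : c.IsClosed (Ideal.span {a} ⊓ Ideal.span {b}) := by
    refine c.isClosed_iff_closure_le.2 ((c.closure_inf_le _ _).trans_eq ?_)
    rw [closure_span_singleton, closure_span_singleton]
  have hmul : c (c (Ideal.span {a} ⊔ Ideal.span {b}) * (Ideal.span {a} ⊓ Ideal.span {b})) =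
      Ideal.span {a * b} := by
    rw [closure_mul_closure_left, hv.closure_sup_mul_inf hc,
      Ideal.span_singleton_mul_span_singleton, closure_span_singleton]
  exact ⟨isPrincipal_of_closure_mul_eq (mul_ne_zero ha hb) hinf hmul,
    isPrincipal_of_closure_mul_eq (mul_ne_zero ha hb) (c.isClosed_closure _)
      ((congrArg c (mul_comm _ _)).trans hmul)⟩

end Local

section Homogeneous

variable {D : Type*} [CommRing D] {c : StarClosure D} {I : Ideal D}

lemma IsHomogeneous.subsingleton_maxClosedAbove (hc : c.IsFinitary) (hI : c.IsHomogeneous I) :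
    (c.maxClosedAbove I).Subsingleton := by
  rintro P ⟨hP, hIP⟩ Q ⟨hQ, hIQ⟩
  by_contra hPQ
  have htop : c (P ⊔ Q) = ⊤ := hP.closure_sup_eq_top fun h => hPQ (hQ.eq_of_le hP h).symm
  obtain ⟨F, hF, hFPQ, h1F⟩ := hc _ 1 ((Ideal.eq_top_iff_one _).1 htop)
  obtain ⟨F₁, F₂, hF₁, hF₂, hF₁P, hF₂Q, hFle⟩ := exists_fg_le_sup hF hFPQ
  refine hI.2.2 (c (I ⊔ c F₁)) (c (I ⊔ c F₂)) ?_ ?_ (hI.2.1.sup (isFiniteType_closure hF₁))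
    (hI.2.1.sup (isFiniteType_closure hF₂)) (le_sup_left.trans (c.le_closure _))
    (le_sup_left.trans (c.le_closure _)) ?_
  · exact hP.closure_ne_top (sup_le hIP (hP.prop.2.closure_le_iff.2 hF₁P))
  · exact hQ.closure_ne_top (sup_le hIQ (hQ.prop.2.closure_le_iff.2 hF₂Q))
  · rw [c.closure_sup_closure, Ideal.eq_top_iff_one]
    refine c.monotone (hFle.trans (sup_le_sup ?_ ?_)) h1F
    all_goals exact (c.le_closure _).trans le_sup_right

lemma isHomogeneous_of_subsingleton (hc : c.IsFinitary) (hI : c.IsFiniteType I) (htop : I ≠ ⊤)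
    (h : (c.maxClosedAbove I).Subsingleton) : c.IsHomogeneous I := by
  refine ⟨htop, hI, fun J J' hJtop hJtop' hJ hJ' hIJ hIJ' => ?_⟩
  obtain ⟨P, hP, hJP⟩ := hc.exists_isMaxClosed_ge (hJ.isClosed.closure_eq ▸ hJtop)
  obtain ⟨Q, hQ, hJQ⟩ := hc.exists_isMaxClosed_ge (hJ'.isClosed.closure_eq ▸ hJtop')
  obtain rfl := h ⟨hP, hIJ.trans hJP⟩ ⟨hQ, hIJ'.trans hJQ⟩
  exact hP.closure_ne_top (sup_le hJP hJQ)

end Homogeneous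

section AlmostGCD

variable {D : Type*} [CommRing D] [IsDomain D] {c : StarClosure D}

lemma IsLocallyValuation.hasPrincipalPower_sup_iff (hv : c.IsLocallyValuation)
    (hc : c.IsFinitary) (a b : D) :
    c.HasPrincipalPower (Ideal.span {a} ⊔ Ideal.span {b}) ↔
      ∃ n : ℕ, 0 < n ∧ (Ideal.span {a ^ n} ⊓ Ideal.span {b ^ n} : Ideal D).IsPrincipal := by
  simp only [HasPrincipalPower, hv.closure_sup_pow hc, Ideal.span_singleton_pow,
    hv.isPrincipal_closure_sup_iff hc]

lemma IsLocallyValuation.hasPrincipalPower_of_fg (hv : c.IsLocallyValuation) (hc : c.IsFinitary)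
    (h : IsAlmostGCD D) {J : Ideal D} (hJ : J.FG) : c.HasPrincipalPower J := by
  induction J, hJ using Submodule.fg_induction with
  | singleton a => exact hasPrincipalPower_of_isPrincipal ⟨a, c.closure_span_singleton a⟩
  | sup F G _ _ ihF ihG =>
    obtain ⟨m, hm, hF⟩ := ihF
    obtain ⟨n, hn, hG⟩ := ihG
    obtain ⟨a, ha⟩ : (c (F ^ (m * n))).IsPrincipal := pow_mul F m n ▸ isPrincipal_closure_pow hF n
    obtain ⟨b, hb⟩ : (c (G ^ (m * n))).IsPrincipal := pow_mul' G m n ▸ isPrincipal_closure_pow hG m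
    have hab : c ((F ⊔ G) ^ (m * n)) = c (Ideal.span {a} ⊔ Ideal.span {b}) := by
      rw [hv.closure_sup_pow hc, ← c.closure_sup_closure, ha, hb]
    refine .of_pow (Nat.mul_pos hm hn) (hasPrincipalPower_closure_iff.1 ?_)
    rw [hab, hasPrincipalPower_closure_iff]
    rcases eq_or_ne a 0 with rfl | ha₀
    · rw [Ideal.span_singleton_zero, bot_sup_eq]
      exact hasPrincipalPower_of_isPrincipal ⟨b, c.closure_span_singleton b⟩
    rcases eq_or_ne b 0 with rfl | hb₀
    · rw [Ideal.span_singleton_zero, sup_bot_eq]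
      exact hasPrincipalPower_of_isPrincipal ⟨a, c.closure_span_singleton a⟩
    exact (hv.hasPrincipalPower_sup_iff hc a b).2 (h a b ha₀ hb₀)

end AlmostGCD

section Invertible

variable {D : Type*} [CommRing D] [IsDomain D] {c : StarClosure D} {P : Ideal D}

lemma IsInvertible.exists_mem_forall_dvd {S : Set D} (hS : c.IsInvertible (Ideal.span S))
    (hP : c.IsMaxClosed P) : ∃ u ∈ S, ∀ v ∈ S, ∃ t ∉ P, u ∣ t * v := by
  obtain ⟨B, -, d, hd, hSB⟩ := hS
  have exists_eq_mul (v : D) (hv : v ∈ S) (b : D) (hb : b ∈ B) : ∃ r, v * b = d * r :=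
    Ideal.mem_span_singleton.1
      (hSB ▸ c.le_closure _ (Ideal.mul_mem_mul (Ideal.subset_span hv) hb))
  obtain ⟨u, hu, b, hb, hub⟩ : ∃ u ∈ S, ∃ b ∈ B, u * b ∉ Ideal.span {d} * P := by
    by_contra! hmem
    have hle : Ideal.span S * B ≤ Ideal.span {d} * P := by
      rw [← B.span_eq, Ideal.span_mul_span', Ideal.span_le]
      rintro _ ⟨u, hu, b, hb, rfl⟩
      exact hmem u hu b hb
    have hdP := c.monotone hle
    rw [hSB, map_span_singleton_mul, hP.prop.2.closure_eq, ← Ideal.mul_top (Ideal.span {d}),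
      mul_assoc, Ideal.top_mul, Ideal.span_singleton_mul_right_mono hd] at hdP
    exact hP.prop.1 (top_le_iff.1 hdP)
  obtain ⟨t, ht⟩ := exists_eq_mul u hu b hb
  refine ⟨u, hu, fun v hv => ⟨t, fun htP => hub ?_, ?_⟩⟩
  · rw [ht]
    exact Ideal.mul_mem_mul (Ideal.mem_span_singleton_self d) htP
  · obtain ⟨r, hr⟩ := exists_eq_mul v hv b hb
    refine ⟨r, mul_left_cancel₀ hd ?_⟩
    linear_combination u * hr - v * ht

lemma isLocallyValuation_of_isInvertible_span_pair
    (h : ∀ a b : D, a ≠ 0 → c.IsInvertible (Ideal.span {a, b})) : c.IsLocallyValuation := by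
  intro P _ hP
  refine valuationRing_localization_atPrime fun a b => ?_
  rcases eq_or_ne a 0 with rfl | ha
  · exact Or.inr ⟨1, (Ideal.ne_top_iff_one P).1 hP.prop.1, by rw [mul_zero]; exact dvd_zero b⟩
  obtain ⟨u, rfl | rfl, hu⟩ := (h a b ha).exists_mem_forall_dvd hP
  · exact Or.inl (hu b (Or.inr rfl))
  · exact Or.inr (hu a (Or.inl rfl))

end Invertible

section AfSH

variable {D : Type*} [CommRing D] {c : StarClosure D}

-- If `I` is a factor of `T` and `A = (J + I)*`, then `J = (A (J : A))*`, where `A` contains `I` and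
-- `J : A` contains the product of the other factors.
lemma hasPrincipalPower_of_prod_le [IsDomain D] {T : Multiset (Ideal D)}
    (hT : ∀ I ∈ T, c.IsAfHomogeneous I) {J : Ideal D} (hJ : c.IsFiniteType J) (h : T.prod ≤ J) :
    c.HasPrincipalPower J := by
  induction T using Multiset.induction_on generalizing J with
  | empty =>
    rw [Multiset.prod_zero, Ideal.one_eq_top, top_le_iff] at h
    refine hasPrincipalPower_of_isPrincipal ?_
    rw [h, c.closure_top]
    exact top_isPrincipal
  | cons I T ih =>
    rw [Multiset.prod_cons] at h
    have hI := hT I (Multiset.mem_cons_self I T)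
    set A := c (J ⊔ I)
    have hJA : J ≤ A := le_sup_left.trans (c.le_closure _)
    have hAft : c.IsFiniteType A := hJ.sup hI.1.2.1
    have hA : c.HasPrincipalPower A := hI.2 A hAft (le_sup_right.trans (c.le_closure _))
    rcases eq_or_ne A ⊥ with hA₀ | hA₀
    · rwa [eq_bot_mono hJA hA₀, ← hA₀]
    have hAinv : c.IsInvertible A := hA.isInvertible hAft hA₀
    have hle : T.prod ≤ J.colon (A : Set D) := by
      rw [le_colon_iff_mul_le]
      refine (c.mul_closure_le _ _).trans (hJ.isClosed.closure_le_iff.2 ?_)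
      rw [Ideal.mul_sup, mul_comm _ I]
      exact sup_le Ideal.mul_le_right h
    have hcolon : c.HasPrincipalPower (J.colon (A : Set D)) :=
      ih (fun K hK => hT K (Multiset.mem_cons_of_mem hK)) (hAinv.isFiniteType_colon hJ hJA) hle
    rw [← hAinv.closure_mul_colon hJ.isClosed hJA, hasPrincipalPower_closure_iff]
    exact hA.mul hcolon

lemma IsAfSH.hasPrincipalPower [IsDomain D] (h : c.IsAfSH) {J : Ideal D} (hJ : c.IsFiniteType J) :
    c.HasPrincipalPower J := by
  by_cases hx : ∃ x ∈ J, x ≠ 0 ∧ ¬IsUnit x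
  · obtain ⟨x, hxJ, hx₀, hxu⟩ := hx
    obtain ⟨T, hT, hTx⟩ := h x hx₀ hxu
    refine hasPrincipalPower_of_prod_le hT hJ ((c.le_closure _).trans ?_)
    rwa [hTx, Ideal.span_singleton_le_iff_mem]
  · push Not at hx
    refine hasPrincipalPower_of_isPrincipal ?_
    rw [hJ.isClosed.closure_eq]
    rcases eq_or_ne J ⊥ with rfl | hJ₀
    · exact bot_isPrincipal
    · obtain ⟨x, hxJ, hx₀⟩ := Submodule.exists_mem_ne_zero_of_ne_bot hJ₀
      exact Ideal.eq_top_of_isUnit_mem J hxJ (hx x hxJ hx₀) ▸ top_isPrincipal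

lemma IsAfSH.isLocallyValuation [IsDomain D] (h : c.IsAfSH) : c.IsLocallyValuation := by
  refine isLocallyValuation_of_isInvertible_span_pair fun a b ha => isInvertible_closure_iff.1 ?_
  have hft : c.IsFiniteType (c (Ideal.span {a, b})) :=
    isFiniteType_closure (Submodule.fg_span (Set.toFinite _))
  refine (h.hasPrincipalPower hft).isInvertible hft fun h₀ => ha ?_
  exact (Submodule.eq_bot_iff _).1 h₀ a (c.le_closure _ (Ideal.subset_span (Or.inl rfl)))

lemma IsAfSH.isAlmostGCD [IsDomain D] (h : c.IsAfSH) (hc : c.IsFinitary) : IsAlmostGCD D := by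
  refine fun a b _ _ => (h.isLocallyValuation.hasPrincipalPower_sup_iff hc a b).1 ?_
  exact hasPrincipalPower_closure_iff.1
    (h.hasPrincipalPower ((isFiniteType_span_singleton a).sup (isFiniteType_span_singleton b)))

lemma IsAfSH.finite_maxClosedAbove (h : c.IsAfSH) (hc : c.IsFinitary) {x : D} (hx₀ : x ≠ 0)
    (hxu : ¬IsUnit x) : (c.maxClosedAbove (Ideal.span {x})).Finite := by
  obtain ⟨T, hT, hTx⟩ := h x hx₀ hxu
  have hfin : (⋃ J ∈ {J | J ∈ T}, c.maxClosedAbove J).Finite :=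
    (Multiset.finite_toSet T).biUnion fun J hJ =>
      ((hT J hJ).1.subsingleton_maxClosedAbove hc).finite
  refine hfin.subset fun P ⟨hP, hxP⟩ => ?_
  obtain ⟨J, hJ, hJP⟩ :=
    (hP.isPrime.multiset_prod_le).1 (((c.le_closure T.prod).trans_eq hTx).trans hxP)
  exact Set.mem_biUnion hJ ⟨hP, hJP⟩

lemma IsAfSH.isIndependent (h : c.IsAfSH) (hc : c.IsFinitary) : c.IsIndependent := by
  intro P Q hP hQ hPQ L hL hL₀ hLle
  obtain ⟨x, hxL, hx₀⟩ := Submodule.exists_mem_ne_zero_of_ne_bot hL₀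
  obtain ⟨T, hT, hTx⟩ := h x hx₀ fun hu => hL.ne_top (Ideal.eq_top_of_isUnit_mem L hxL hu)
  have hTL : T.prod ≤ L :=
    ((c.le_closure T.prod).trans_eq hTx).trans ((Ideal.span_singleton_le_iff_mem L).2 hxL)
  obtain ⟨J, hJ, hJL⟩ := hL.multiset_prod_le.1 hTL
  exact hPQ ((hT J hJ).1.subsingleton_maxClosedAbove hc ⟨hP, hJL.trans (hLle.trans inf_le_left)⟩
    ⟨hQ, hJL.trans (hLle.trans inf_le_right)⟩)

end AfSH

section Factorization

variable {D : Type*} [CommRing D] [IsDomain D] {c : StarClosure D} {I P Q : Ideal D}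

lemma IsIndependent.exists_separation (hind : c.IsIndependent)
    (hinv : ∀ J, c.IsFiniteType J → J ≠ ⊥ → c.IsInvertible J) (hI : c.IsFiniteType I)
    (hI₀ : I ≠ ⊥) (hP : c.IsMaxClosed P) (hQ : c.IsMaxClosed Q) (hPQ : P ≠ Q) :
    ∃ A B : Ideal D, c.IsFiniteType A ∧ c.IsFiniteType B ∧ I ≤ A ∧ I ≤ B ∧ ¬A ≤ P ∧ ¬B ≤ Q ∧
      c (A * B) = I := by
  have := hP.isPrime
  have := hQ.isPrime
  obtain ⟨x, hxI, hx₀⟩ := Submodule.exists_mem_ne_zero_of_ne_bot hI₀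
  obtain ⟨u, huP, v, hvQ, hxuv⟩ : ∃ u ∉ P, ∃ v ∉ Q, x ∣ u * v :=
    exists_dvd_mul_of_forall_prime fun L hL hxL =>
      hind P Q hP hQ hPQ L hL fun hL₀ => hx₀ ((Submodule.mem_bot D).1 (hL₀ ▸ hxL))
  set A := c (I ⊔ Ideal.span {u})
  have hA : c.IsFiniteType A := hI.sup (isFiniteType_span_singleton u)
  have hIA : I ≤ A := le_sup_left.trans (c.le_closure _)
  have huA : u ∈ A := c.le_closure _ (Ideal.mem_sup_right (Ideal.mem_span_singleton_self u))
  have hAinv : c.IsInvertible A := hinv A hA (ne_bot_of_le_ne_bot hI₀ hIA)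
  have hv : v ∈ I.colon (A : Set D) := by
    rw [← Ideal.span_singleton_le_iff_mem, le_colon_iff_mul_le, ← map_span_singleton_mul,
      hI.isClosed.closure_le_iff, Ideal.mul_sup, Ideal.span_singleton_mul_span_singleton]
    refine sup_le Ideal.mul_le_right ((Ideal.span_singleton_le_iff_mem I).2 ?_)
    exact I.mem_of_dvd (mul_comm u v ▸ hxuv) hxI
  exact ⟨A, I.colon (A : Set D), hA, hAinv.isFiniteType_colon hI hIA, hIA,
    le_colon_iff_mul_le.2 Ideal.mul_le_left, fun h => huP (h huA), fun h => hvQ (h hv),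
    hAinv.closure_mul_colon hI.isClosed hIA⟩

lemma IsIndependent.exists_homogeneous_prod (hind : c.IsIndependent) (hc : c.IsFinitary)
    (hinv : ∀ J, c.IsFiniteType J → J ≠ ⊥ → c.IsInvertible J) (hI : c.IsFiniteType I)
    (hI₀ : I ≠ ⊥) (hfin : (c.maxClosedAbove I).Finite) :
    ∃ T : Multiset (Ideal D), (∀ J ∈ T, c.IsHomogeneous J) ∧ c T.prod = I := by
  induction hn : (c.maxClosedAbove I).ncard using Nat.strong_induction_on generalizing I with
  | h n ih =>
  subst hn
  rcases eq_or_ne I ⊤ with rfl | htop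
  · exact ⟨0, by simp only [Multiset.notMem_zero, false_imp_iff, implies_true],
      by rw [Multiset.prod_zero, Ideal.one_eq_top, c.closure_top]⟩
  rcases (c.maxClosedAbove I).subsingleton_or_nontrivial with hsub | ⟨P, hP, Q, hQ, hPQ⟩
  · refine ⟨{I}, fun J hJ => ?_, by rw [Multiset.prod_singleton, hI.isClosed.closure_eq]⟩
    exact Multiset.mem_singleton.1 hJ ▸ isHomogeneous_of_subsingleton hc hI htop hsub
  have factor (J : Ideal D) (hJ : c.IsFiniteType J) (hIJ : I ≤ J) (M : Ideal D)
      (hM : M ∈ c.maxClosedAbove I) (hJM : ¬J ≤ M) :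
      ∃ T : Multiset (Ideal D), (∀ K ∈ T, c.IsHomogeneous K) ∧ c T.prod = J := by
    have hss : c.maxClosedAbove J ⊂ c.maxClosedAbove I :=
      (Set.ssubset_iff_of_subset (c.maxClosedAbove_antitone hIJ)).2
        ⟨M, hM, fun hMJ : M ∈ c.maxClosedAbove J => hJM hMJ.2⟩
    exact ih _ (Set.ncard_lt_ncard hss hfin) hJ (ne_bot_of_le_ne_bot hI₀ hIJ)
      (hfin.subset hss.subset) rfl
  obtain ⟨A, B, hA, hB, hIA, hIB, hAP, hBQ, hAB⟩ :=
    hind.exists_separation hinv hI hI₀ hP.1 hQ.1 hPQ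
  obtain ⟨S, hS, hSA⟩ := factor A hA hIA P hP hAP
  obtain ⟨T, hT, hTB⟩ := factor B hB hIB Q hQ hBQ
  refine ⟨S + T, fun J hJ => (Multiset.mem_add.1 hJ).elim (hS J) (hT J), ?_⟩
  rw [Multiset.prod_add, ← closure_mul_closure_left, ← closure_mul_closure_right, hSA, hTB, hAB]

lemma IsIRKT.isAfSH (h : c.IsIRKT) (hc : c.IsFinitary) (hD : IsAlmostGCD D) : c.IsAfSH := by
  have hpow (J : Ideal D) (hJ : c.IsFiniteType J) : c.HasPrincipalPower J := by
    obtain ⟨F, hF, rfl⟩ := hJ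
    exact hasPrincipalPower_closure_iff.2 (h.isLocallyValuation.hasPrincipalPower_of_fg hc hD hF)
  intro x hx₀ hxu
  obtain ⟨T, hT, hTx⟩ := h.isIndependent.exists_homogeneous_prod hc
    (fun J hJ => (hpow J hJ).isInvertible hJ) (isFiniteType_span_singleton x)
    (by rwa [Ne, Ideal.span_singleton_eq_bot]) (h.finite_maxClosedAbove x hx₀ hxu)
  exact ⟨T, fun J hJ => ⟨hT J hJ, fun K hK _ => hpow K hK⟩, hTx⟩

theorem isAfSH_iff (hc : c.IsFinitary) : c.IsAfSH ↔ IsAlmostGCD D ∧ c.IsIRKT :=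
  ⟨fun h => ⟨h.isAlmostGCD hc, h.isLocallyValuation, fun _ => h.finite_maxClosedAbove hc,
    h.isIndependent hc⟩, fun ⟨hD, h⟩ => h.isAfSH hc hD⟩

end Factorization

end StarClosure

namespace StarOperation

variable {D K : Type*} [CommRing D] [IsDomain D] [Field K] [Algebra D K] [IsFractionRing D K]
variable (s : StarOperation D K) {I J P : Ideal D}

open Classical in
/-- The restriction of a star operation to integral ideals. The value of `s.star` at `0` is
arbitrary, so `⊥ ↦ ⊥` is imposed. -/
noncomputable def idealStar (I : Ideal D) : Ideal D :=
  if I = ⊥ then ⊥ else (s.star (I : FractionalIdeal D⁰ K) : Submodule D K).comap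
    (Algebra.linearMap D K)

lemma idealStar_bot : s.idealStar ⊥ = ⊥ := if_pos rfl

lemma mem_idealStar (hI : I ≠ ⊥) {x : D} :
    x ∈ s.idealStar I ↔ algebraMap D K x ∈ s.star (I : FractionalIdeal D⁰ K) := by
  rw [idealStar, if_neg hI]
  rfl

lemma star_coeIdeal_le_one (hI : I ≠ ⊥) : s.star (I : FractionalIdeal D⁰ K) ≤ 1 := by
  have hone : s.star 1 = 1 := by
    simpa only [FractionalIdeal.spanSingleton_one] using s.star_spanSingleton 1 one_ne_zero
  exact hone ▸ s.star_mono I 1 (FractionalIdeal.coeIdeal_ne_zero.2 hI) one_ne_zero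
    FractionalIdeal.coeIdeal_le_one

lemma coe_idealStar (hI : I ≠ ⊥) :
    (s.idealStar I : FractionalIdeal D⁰ K) = s.star (I : FractionalIdeal D⁰ K) := by
  obtain ⟨J, hJ⟩ := FractionalIdeal.le_one_iff_exists_coeIdeal.1 (s.star_coeIdeal_le_one hI)
  rw [← hJ, FractionalIdeal.coeIdeal_inj]
  ext x
  rw [s.mem_idealStar hI, ← hJ, FractionalIdeal.mem_coeIdeal]
  exact (IsFractionRing.injective D K).mem_set_image

lemma le_idealStar (I : Ideal D) : I ≤ s.idealStar I := by
  rcases eq_or_ne I ⊥ with rfl | hI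
  · exact bot_le
  · rw [← FractionalIdeal.coeIdeal_le_coeIdeal K, s.coe_idealStar hI]
    exact s.le_star _ (FractionalIdeal.coeIdeal_ne_zero.2 hI)

lemma idealStar_mono : Monotone s.idealStar := by
  intro I J hIJ
  rcases eq_or_ne I ⊥ with rfl | hI
  · rw [idealStar_bot]
    exact bot_le
  · have hJ : J ≠ ⊥ := ne_bot_of_le_ne_bot hI hIJ
    rw [← FractionalIdeal.coeIdeal_le_coeIdeal K, s.coe_idealStar hI, s.coe_idealStar hJ]
    exact s.star_mono _ _ (FractionalIdeal.coeIdeal_ne_zero.2 hI)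
      (FractionalIdeal.coeIdeal_ne_zero.2 hJ) ((FractionalIdeal.coeIdeal_le_coeIdeal K).2 hIJ)

lemma idealStar_idealStar (I : Ideal D) : s.idealStar (s.idealStar I) = s.idealStar I := by
  rcases eq_or_ne I ⊥ with rfl | hI
  · rw [idealStar_bot, idealStar_bot]
  · rw [← FractionalIdeal.coeIdeal_inj (K := K), s.coe_idealStar, s.coe_idealStar hI,
      s.star_idem _ (FractionalIdeal.coeIdeal_ne_zero.2 hI)]
    exact ne_bot_of_le_ne_bot hI (s.le_idealStar I)

lemma idealStar_span_singleton_mul (a : D) (I : Ideal D) :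
    s.idealStar (Ideal.span {a} * I) = Ideal.span {a} * s.idealStar I := by
  rcases eq_or_ne a 0 with rfl | ha
  · rw [Ideal.span_singleton_zero, Ideal.bot_mul, Ideal.bot_mul, idealStar_bot]
  rcases eq_or_ne I ⊥ with rfl | hI
  · rw [Ideal.mul_bot, idealStar_bot, Ideal.mul_bot]
  have haI : Ideal.span {a} * I ≠ ⊥ := mul_ne_zero (mt Ideal.span_singleton_eq_bot.1 ha) hI
  have haK : algebraMap D K a ≠ 0 := IsFractionRing.to_map_ne_zero_of_mem_nonZeroDivisors
    (mem_nonZeroDivisors_of_ne_zero ha)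
  rw [← FractionalIdeal.coeIdeal_inj (K := K), s.coe_idealStar haI, FractionalIdeal.coeIdeal_mul,
    FractionalIdeal.coeIdeal_mul, s.coe_idealStar hI, FractionalIdeal.coeIdeal_span_singleton]
  exact s.star_smul _ _ haK (FractionalIdeal.coeIdeal_ne_zero.2 hI)

/-- The closure on integral ideals induced by a star operation. -/
noncomputable def toStarClosure : StarClosure D where
  toClosureOperator :=
    .mk' s.idealStar s.idealStar_mono s.le_idealStar fun I => (s.idealStar_idealStar I).le
  map_span_singleton_mul' := s.idealStar_span_singleton_mul

variable {s}

lemma FiniteCharacter.isFinitary (hs : s.FiniteCharacter) : s.toStarClosure.IsFinitary := by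
  intro I x hx
  rcases eq_or_ne I ⊥ with rfl | hI
  · exact ⟨⊥, Submodule.fg_bot, le_rfl, hx⟩
  obtain ⟨F, hF₀, hF, hFI, hxF⟩ :=
    hs I (FractionalIdeal.coeIdeal_ne_zero.2 hI) _ ((s.mem_idealStar hI).1 hx)
  obtain ⟨J, rfl⟩ := FractionalIdeal.le_one_iff_exists_coeIdeal.1
    (hFI.trans FractionalIdeal.coeIdeal_le_one)
  exact ⟨J, (FractionalIdeal.coeIdeal_fg D⁰ (IsFractionRing.injective D K) J).1 hF,
    (FractionalIdeal.coeIdeal_le_coeIdeal K).1 hFI,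
    (s.mem_idealStar (FractionalIdeal.coeIdeal_ne_zero.1 hF₀)).2 hxF⟩

lemma star_coeIdeal_eq_iff (hI : I ≠ ⊥) :
    s.star (I : FractionalIdeal D⁰ K) = (J : FractionalIdeal D⁰ K) ↔ s.toStarClosure I = J := by
  rw [← s.coe_idealStar hI, FractionalIdeal.coeIdeal_inj]
  rfl

lemma star_coeIdeal_eq_one_iff (hI : I ≠ ⊥) :
    s.star (I : FractionalIdeal D⁰ K) = 1 ↔ s.toStarClosure I = ⊤ := by
  rw [← FractionalIdeal.coeIdeal_top, star_coeIdeal_eq_iff hI]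

lemma isStarIdeal_iff : s.IsStarIdeal I ↔ I ≠ ⊥ ∧ s.toStarClosure.IsClosed I :=
  and_congr_right fun hI => (star_coeIdeal_eq_iff hI).trans s.toStarClosure.isClosed_iff.symm

lemma isFiniteTypeStarIdeal_iff :
    s.IsFiniteTypeStarIdeal I ↔ I ≠ ⊥ ∧ s.toStarClosure.IsFiniteType I := by
  constructor
  · rintro ⟨J, hJ₀, hJ, hJI⟩
    obtain rfl := (star_coeIdeal_eq_iff hJ₀).1 hJI
    exact ⟨ne_bot_of_le_ne_bot hJ₀ (s.toStarClosure.le_closure J), J, hJ, rfl⟩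
  · rintro ⟨hI₀, J, hJ, rfl⟩
    have hJ₀ : J ≠ ⊥ := by
      rintro rfl
      exact hI₀ s.toStarClosure.closure_bot
    exact ⟨J, hJ₀, hJ, (star_coeIdeal_eq_iff hJ₀).2 rfl⟩

lemma isMaxStarIdeal_iff : s.IsMaxStarIdeal P ↔ P ≠ ⊥ ∧ s.toStarClosure.IsMaxClosed P := by
  simp only [IsMaxStarIdeal, isStarIdeal_iff]
  constructor
  · rintro ⟨htop, ⟨hP₀, hP⟩, hmax⟩
    exact ⟨hP₀, ⟨htop, hP⟩, fun J hJ hPJ =>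
      (hmax J hJ.1 ⟨ne_bot_of_le_ne_bot hP₀ hPJ, hJ.2⟩ hPJ).le⟩
  · rintro ⟨hP₀, hP⟩
    exact ⟨hP.prop.1, ⟨hP₀, hP.prop.2⟩, fun J hJ hJclosed hPJ =>
      (hP.le_of_ge ⟨hJ, hJclosed.2⟩ hPJ).antisymm hPJ⟩

lemma isHomog_iff : s.IsHomog I ↔ I ≠ ⊥ ∧ s.toStarClosure.IsHomogeneous I := by
  simp only [IsHomog, isStarIdeal_iff, isFiniteTypeStarIdeal_iff]
  have sup_iff (hI : I ≠ ⊥) {J J' : Ideal D} (hIJ : I ≤ J) :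
      s.star ((J + J' : Ideal D) : FractionalIdeal D⁰ K) ≠ 1 ↔ s.toStarClosure (J ⊔ J') ≠ ⊤ :=
    (star_coeIdeal_eq_one_iff (ne_bot_of_le_ne_bot hI (hIJ.trans le_sup_left))).not
  constructor
  · rintro ⟨htop, -, ⟨hI₀, hI⟩, h⟩
    refine ⟨hI₀, htop, hI, fun J J' hJtop hJtop' hJ hJ' hIJ hIJ' => ?_⟩
    have hJ₀ : J ≠ ⊥ := ne_bot_of_le_ne_bot hI₀ hIJ
    have hJ₀' : J' ≠ ⊥ := ne_bot_of_le_ne_bot hI₀ hIJ'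
    exact (sup_iff hI₀ hIJ).1 (h J J' hJtop hJtop' ⟨hJ₀, hJ.isClosed⟩ ⟨hJ₀', hJ'.isClosed⟩
      ⟨hJ₀, hJ⟩ ⟨hJ₀', hJ'⟩ hIJ hIJ')
  · rintro ⟨hI₀, htop, hI, h⟩
    exact ⟨htop, ⟨hI₀, hI.isClosed⟩, ⟨hI₀, hI⟩, fun J J' hJtop hJtop' _ _ hJ hJ' hIJ hIJ' =>
      (sup_iff hI₀ hIJ).2 (h J J' hJtop hJtop' hJ.2 hJ'.2 hIJ hIJ')⟩

lemma exists_star_pow_eq_span_singleton_iff (hI : I ≠ ⊥) :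
    (∃ n : ℕ, 0 < n ∧ ∃ d : D, s.star ((I ^ n : Ideal D) : FractionalIdeal D⁰ K) =
      ((Ideal.span {d} : Ideal D) : FractionalIdeal D⁰ K)) ↔
    s.toStarClosure.HasPrincipalPower I := by
  simp only [star_coeIdeal_eq_iff (pow_ne_zero _ hI), StarClosure.HasPrincipalPower,
    Submodule.isPrincipal_iff, Ideal.submodule_span_eq]

lemma isAfHomog_iff : s.IsAfHomog I ↔ I ≠ ⊥ ∧ s.toStarClosure.IsAfHomogeneous I := by
  simp only [IsAfHomog, isHomog_iff, isStarIdeal_iff, isFiniteTypeStarIdeal_iff,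
    StarClosure.IsAfHomogeneous, and_assoc]
  refine and_congr_right fun hI => and_congr_right fun _ => forall_congr' fun J => ?_
  constructor
  · intro h hJ hIJ
    have hJ₀ : J ≠ ⊥ := ne_bot_of_le_ne_bot hI hIJ
    exact (exists_star_pow_eq_span_singleton_iff hJ₀).1 (h ⟨hJ₀, hJ.isClosed⟩ ⟨hJ₀, hJ⟩ hIJ)
  · exact fun h _ hJ hIJ => (exists_star_pow_eq_span_singleton_iff hJ.1).2 (h hJ.2 hIJ)

variable (s) in
lemma isAfSH_toStarClosure_iff : s.toStarClosure.IsAfSH ↔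
    ∀ x : D, x ≠ 0 → ¬IsUnit x →
      ∃ T : Multiset (Ideal D), (∀ J ∈ T, s.IsAfHomog J) ∧
        s.star ((T.prod : Ideal D) : FractionalIdeal D⁰ K) =
          ((Ideal.span {x} : Ideal D) : FractionalIdeal D⁰ K) := by
  refine forall_congr' fun x => forall_congr' fun hx => forall_congr' fun _ =>
    exists_congr fun T => ?_
  simp only [isAfHomog_iff]
  constructor
  · rintro ⟨hT, hTx⟩
    have hT₀ : T.prod ≠ ⊥ := by
      intro h
      rw [h, StarClosure.closure_bot] at hTx
      exact hx (Ideal.span_singleton_eq_bot.1 hTx.symm)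
    have hne (J : Ideal D) (hJ : J ∈ T) : J ≠ ⊥ := by
      rintro rfl
      exact hT₀ (Multiset.prod_eq_zero hJ)
    exact ⟨fun J hJ => ⟨hne J hJ, hT J hJ⟩, (star_coeIdeal_eq_iff hT₀).2 hTx⟩
  · rintro ⟨hT, hTx⟩
    have hT₀ : T.prod ≠ ⊥ := Multiset.prod_ne_zero fun h => (hT ⊥ h).1 rfl
    exact ⟨fun J hJ => (hT J hJ).2, (star_coeIdeal_eq_iff hT₀).1 hTx⟩

lemma FiniteCharacter.exists_algebraMap_eq (hs : s.FiniteCharacter) {x : K}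
    (hx : ∀ P : Ideal D, s.IsMaxStarIdeal P →
      ∃ a t : D, t ∉ P ∧ x * algebraMap D K t = algebraMap D K a) :
    ∃ d : D, algebraMap D K d = x := by
  obtain ⟨a, b, hb, rfl⟩ := IsFractionRing.div_surjective (A := D) x
  have hbK : algebraMap D K b ≠ 0 := IsFractionRing.to_map_ne_zero_of_mem_nonZeroDivisors hb
  obtain ⟨q, rfl⟩ : b ∣ a := by
    refine hs.isFinitary.dvd_of_forall fun P hP => ?_
    rcases eq_or_ne P ⊥ with rfl | hP₀
    · exact ⟨b, mt Ideal.mem_bot.1 (nonZeroDivisors.ne_zero hb), dvd_mul_right b a⟩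
    · obtain ⟨r, t, ht, hr⟩ := hx P (isMaxStarIdeal_iff.2 ⟨hP₀, hP⟩)
      refine ⟨t, ht, r, IsFractionRing.injective D K ?_⟩
      rw [map_mul, map_mul, ← hr]
      field_simp
  exact ⟨q, by rw [map_mul, mul_div_cancel_left₀ _ hbK]⟩

lemma isLocallyValuation_toStarClosure_iff : s.toStarClosure.IsLocallyValuation ↔
    ∀ (P : Ideal D) [P.IsPrime], s.IsMaxStarIdeal P →
      ValuationRing (Localization.AtPrime P) := by
  simp only [isMaxStarIdeal_iff]
  refine ⟨fun h P _ hP => h P hP.2, fun h P _ hP => ?_⟩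
  rcases eq_or_ne P ⊥ with rfl | hP₀
  · refine valuationRing_localization_atPrime fun a b => ?_
    rcases eq_or_ne a 0 with rfl | ha
    · exact Or.inr ⟨1, one_ne_zero, by rw [mul_zero]; exact dvd_zero b⟩
    · exact Or.inl ⟨a, ha, dvd_mul_right a b⟩
  · exact h P ⟨hP₀, hP⟩

lemma finiteStarCharacter_iff : s.FiniteStarCharacter ↔ ∀ x : D, x ≠ 0 → ¬IsUnit x →
    (s.toStarClosure.maxClosedAbove (Ideal.span {x})).Finite := by
  refine forall_congr' fun x => forall_congr' fun hx => forall_congr' fun _ => ?_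
  refine iff_of_eq (congrArg Set.Finite (Set.ext fun P => ?_))
  have hP₀ (hxP : x ∈ P) : P ≠ ⊥ := fun h => hx (Ideal.mem_bot.1 (h ▸ hxP))
  simp only [isMaxStarIdeal_iff, StarClosure.maxClosedAbove, Set.mem_ofPred_eq,
    Ideal.span_singleton_le_iff_mem]
  exact ⟨fun h => ⟨h.1.2, h.2⟩, fun h => ⟨⟨hP₀ h.2, h.1⟩, h.2⟩⟩

lemma isIndependent_toStarClosure_iff : s.toStarClosure.IsIndependent ↔
    ∀ P Q : Ideal D, s.IsMaxStarIdeal P → s.IsMaxStarIdeal Q → P ≠ Q →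
      ∀ L : Ideal D, L.IsPrime → L ≠ ⊥ → ¬L ≤ P ⊓ Q := by
  simp only [isMaxStarIdeal_iff]
  refine ⟨fun h P Q hP hQ => h P Q hP.2 hQ.2, fun h P Q hP hQ hPQ L hL hL₀ hle => ?_⟩
  exact h P Q ⟨ne_bot_of_le_ne_bot hL₀ (hle.trans inf_le_left), hP⟩
    ⟨ne_bot_of_le_ne_bot hL₀ (hle.trans inf_le_right), hQ⟩ hPQ L hL hL₀ hle

lemma FiniteCharacter.isIRKT_toStarClosure_iff (hs : s.FiniteCharacter) :
    s.toStarClosure.IsIRKT ↔ s.IsIRKT := by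
  simp only [IsIRKT, ← isLocallyValuation_toStarClosure_iff, finiteStarCharacter_iff,
    ← isIndependent_toStarClosure_iff]
  exact ⟨fun h => ⟨h.1, fun _ => hs.exists_algebraMap_eq, h.2, h.3⟩,
    fun h => ⟨h.1, h.2.2.1, h.2.2.2⟩⟩

end StarOperation

/-- For an integral domain `D`, every principal ideal generated by a
nonzero nonunit is a `*`-product of finitely many `*`-af-homogeneous ideals iff `D` is
an AGCD domain and a `*`-IRKT. -/
theorem afSH_iff_AGCD_IRKT {D K : Type*} [CommRing D] [IsDomain D] [Field K]
    [Algebra D K] [IsFractionRing D K] (s : StarOperation D K) (hs : s.FiniteCharacter) :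
    (∀ x : D, x ≠ 0 → ¬IsUnit x →
      ∃ T : Multiset (Ideal D), (∀ J ∈ T, s.IsAfHomog J) ∧
        s.star ((T.prod : Ideal D) : FractionalIdeal D⁰ K) =
          ((Ideal.span {x} : Ideal D) : FractionalIdeal D⁰ K)) ↔
    ((∀ a b : D, a ≠ 0 → b ≠ 0 → ∃ n : ℕ, 0 < n ∧
        (Ideal.span {a ^ n} ⊓ Ideal.span {b ^ n} : Ideal D).IsPrincipal) ∧
      s.IsIRKT) := by
  rw [← s.isAfSH_toStarClosure_iff, ← hs.isIRKT_toStarClosure_iff]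
  exact StarClosure.isAfSH_iff hs.isFinitary
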